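/- Splitting Lemma: Let X and Y be finite probability spaces and A ⊆ X × Y with Pr[(x,y) ∈ A] ≥ ε (under the product distribution). For any α < ε define B = {(x,y) ∈ X×Y : Pr_{y'∈Y}[(x,y') ∈ A] ≥ ε - α}. Then (i) Pr[B] ≥ α; (ii) for all (x,y) ∈ B, Pr_{y'∈Y}[(x,y') ∈ A] ≥ ε - α; and (iii) Pr[B | A] ≥ α/ε. -/

import Mathlib

open MeasureTheory ProbabilityTheory

/-- Splitting Lemma (Pointcheval–Stern): if Pr[(x,y) ∈ A] ≥ ε under a product
distribution and α < ε, then setting B = {(x,y) : Pr_{y'}[(x,y') ∈ A] ≥ ε - α},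
we have (i) Pr[B] ≥ α, (ii) the defining property of B, and (iii) Pr[B | A] ≥ α/ε. -/
theorem splitting_lemma (X Y : Type*) [Fintype X] [Fintype Y]
    [MeasurableSpace X] [MeasurableSpace Y]
    (μX : Measure X) (μY : Measure Y) [IsProbabilityMeasure μX] [IsProbabilityMeasure μY]
    (A : Set (X × Y)) (hA : MeasurableSet A) (ε α : ENNReal) (hε : μX.prod μY A ≥ ε)
    (hα : α < ε) :
    (μX.prod μY {p : X × Y | μY {y' : Y | (p.1, y') ∈ A} ≥ ε - α} ≥ α) ∧
    (∀ p ∈ {p : X × Y | μY {y' : Y | (p.1, y') ∈ A} ≥ ε - α},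
        μY {y' : Y | (p.1, y') ∈ A} ≥ ε - α) ∧
    ((μX.prod μY)[|A] {p : X × Y | μY {y' : Y | (p.1, y') ∈ A} ≥ ε - α} ≥ α / ε) := by
  set f : X → ENNReal := fun x => μY {y' : Y | (x, y') ∈ A} with hf
  have hfm : Measurable f := measurable_measure_prodMk_left hA
  set S : Set X := {x | ε - α ≤ f x} with hS
  have hSm : MeasurableSet S := measurableSet_le measurable_const hfm
  set B : Set (X × Y) := {p : X × Y | μY {y' : Y | (p.1, y') ∈ A} ≥ ε - α} with hB
  have hBm : MeasurableSet B := measurable_fst hSm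
  have ha1 : μX.prod μY A ≤ 1 := prob_le_one
  have hεtop : ε ≠ ⊤ := ((hε.le.trans ha1).trans_lt ENNReal.one_lt_top).ne
  have hε0 : ε ≠ 0 := (bot_le.trans_lt hα).ne'
  have hatop : μX.prod μY A ≠ ⊤ := measure_ne_top _ _
  have ha0 : μX.prod μY A ≠ 0 := fun h => hε0 (le_antisymm (h ▸ hε) bot_le)
  have hsplit : μX.prod μY (A ∩ B) + μX.prod μY (A \ B) = μX.prod μY A :=
    measure_inter_add_diff A hBm
  have hc : μX.prod μY (A \ B) ≤ ε - α := by
    rw [Measure.prod_apply (hA.diff hBm)]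
    calc ∫⁻ x, μY (Prod.mk x ⁻¹' (A \ B)) ∂μX ≤ ∫⁻ _, (ε - α) ∂μX := by
          apply lintegral_mono
          intro x
          by_cases hx : ε - α ≤ f x
          · have : Prod.mk x ⁻¹' (A \ B) = ∅ := by
              ext y
              simp only [Set.mem_preimage, Set.mem_diff, Set.mem_empty_iff_false, iff_false,
                not_and, not_not]
              intro _
              exact hx
            simp [this]
          · exact (measure_mono (fun y hy => hy.1)).trans (not_le.1 hx).le
      _ = ε - α := by simp
  have hdtop : ε - α ≠ ⊤ := ENNReal.sub_ne_top hεtop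
  have hsum : α + (ε - α) = ε := add_tsub_cancel_of_le hα.le
  have hb : α ≤ μX.prod μY (A ∩ B) := by
    apply (ENNReal.add_le_add_iff_right hdtop).1
    rw [hsum]
    exact hε.le.trans (hsplit ▸ add_le_add_right hc _)
  refine ⟨hb.trans (measure_mono Set.inter_subset_right), fun p hp => hp, ?_⟩
  rw [cond_apply hA, mul_comm, ← div_eq_mul_inv]
  have h2 : (ε - α) / ε ≠ ⊤ := ENNReal.div_ne_top hdtop hε0
  apply (ENNReal.add_le_add_iff_right h2).1
  rw [← ENNReal.add_div, hsum, ENNReal.div_self hε0 hεtop, ← ENNReal.div_self ha0 hatop]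
  nth_rw 1 [← hsplit]
  rw [ENNReal.add_div]
  exact add_le_add_right (ENNReal.div_le_div hc hε) _
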